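/- arXiv:0906.2160 — 4 statements merged into one kernel-verified Lean document; each statement's English description precedes it below -/
import Mathlib

section
/- Let (M,d) be a complete cone metric space over a real Banach space E with cone P (with nonempty interior), and let T, S : M → M be maps such that T is continuous and injective. Suppose S is of class D_T(a,b) with constants a, b ≥ 0 satisfying a + 2b < 1. Then for every x₀ ∈ M the sequence (T S^n x₀)_{n≥0} is a Cauchy sequence in (M,d); that is, for every c ∈ E with 0 ≪ c there exists N ∈ ℕ such that d(T S^m x₀, T S^n x₀) ≪ c for all m, n ≥ N. (This is the precise meaning of lim_{m,n→∞} d(T S^m x₀, T S^n x₀) = 0.) -/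
open Filter

section ConeMetricDefs

variable {E : Type*} [NormedAddCommGroup E] [NormedSpace ℝ E]

/-- `P` is a cone in the real Banach space `E`. -/
def IsCone (P : Set E) : Prop :=
  P.Nonempty ∧ IsClosed P ∧ P ≠ {0} ∧
    (∀ a b : ℝ, 0 ≤ a → 0 ≤ b → ∀ x y : E, x ∈ P → y ∈ P → a • x + b • y ∈ P) ∧
    (∀ x : E, x ∈ P → -x ∈ P → x = 0)

/-- `x ≤ y` with respect to the cone `P`, i.e. `y - x ∈ P`. -/
def ConeLe (P : Set E) (x y : E) : Prop := y - x ∈ P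

/-- `x ≪ y` with respect to the cone `P`, i.e. `y - x ∈ interior P`. -/
def ConeLt (P : Set E) (x y : E) : Prop := y - x ∈ interior P

/-- `d` is a cone metric on `M` with respect to the cone `P ⊆ E`. -/
def IsConeMetric (P : Set E) {M : Type*} (d : M → M → E) : Prop :=
  (∀ x y : M, ConeLe P 0 (d x y)) ∧
  (∀ x y : M, d x y = 0 ↔ x = y) ∧
  (∀ x y : M, d x y = d y x) ∧
  (∀ x y z : M, ConeLe P (d x y) (d x z + d z y))

/-- The sequence `x` converges to `l` in the cone metric space `(M, d)`. -/
def ConeSeqTendsto (P : Set E) {M : Type*} (d : M → M → E) (x : ℕ → M) (l : M) : Prop :=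
  ∀ c : E, ConeLt P 0 c → ∃ N : ℕ, ∀ n ≥ N, ConeLt P (d (x n) l) c

/-- The sequence `x` is a Cauchy sequence in the cone metric space `(M, d)`. -/
def ConeSeqCauchy (P : Set E) {M : Type*} (d : M → M → E) (x : ℕ → M) : Prop :=
  ∀ c : E, ConeLt P 0 c → ∃ N : ℕ, ∀ m ≥ N, ∀ n ≥ N, ConeLt P (d (x m) (x n)) c

/-- The cone metric space `(M, d)` is complete. -/
def ConeComplete (P : Set E) {M : Type*} (d : M → M → E) : Prop :=
  ∀ x : ℕ → M, ConeSeqCauchy P d x → ∃ l, ConeSeqTendsto P d x l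

/-- `T : M → M` is (sequentially) continuous on the cone metric space `(M, d)`. -/
def ConeContinuous (P : Set E) {M : Type*} (d : M → M → E) (T : M → M) : Prop :=
  ∀ (x : ℕ → M) (l : M), ConeSeqTendsto P d x l →
    ConeSeqTendsto P d (fun n => T (x n)) (T l)

/-- `T : M → M` is subsequentially convergent: whenever `(T yₙ)` converges,
`(yₙ)` has a convergent subsequence. -/
def ConeSubseqConvergent (P : Set E) {M : Type*} (d : M → M → E) (T : M → M) : Prop :=
  ∀ y : ℕ → M, (∃ l, ConeSeqTendsto P d (fun n => T (y n)) l) →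
    ∃ φ : ℕ → ℕ, StrictMono φ ∧ ∃ l, ConeSeqTendsto P d (fun n => y (φ n)) l

/-- `T : M → M` is sequentially convergent: whenever `(T yₙ)` converges,
`(yₙ)` converges. -/
def ConeSeqConvergent (P : Set E) {M : Type*} (d : M → M → E) (T : M → M) : Prop :=
  ∀ y : ℕ → M, (∃ l, ConeSeqTendsto P d (fun n => T (y n)) l) →
    ∃ l, ConeSeqTendsto P d y l

/-- `S` is of class `D_T(a, b)`:
`d(TSx, TSy) ≤ a • d(Tx, Ty) + b • (d(Tx, TSx) + d(Ty, TSy))` for all `x, y`. -/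
def IsClassDT (P : Set E) {M : Type*} (d : M → M → E) (T S : M → M) (a b : ℝ) : Prop :=
  ∀ x y : M, ConeLe P (d (T (S x)) (T (S y)))
    (a • d (T x) (T y) + b • (d (T x) (T (S x)) + d (T y) (T (S y))))

end ConeMetricDefs

/-- if `S ∈ D_T(a,b)` with `a + 2b < 1`, then for every `x₀` the
sequence `(T S^n x₀)` is Cauchy in the complete cone metric space `(M, d)`. -/
theorem stmt0 {E : Type*} [NormedAddCommGroup E] [NormedSpace ℝ E] [CompleteSpace E]
    {M : Type*} (P : Set E) (hP : IsCone P) (hPint : (interior P).Nonempty)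
    (d : M → M → E) (hd : IsConeMetric P d) (hcomplete : ConeComplete P d)
    (T S : M → M) (hTcont : ConeContinuous P d T) (hTinj : Function.Injective T)
    (a b : ℝ) (ha : 0 ≤ a) (hb : 0 ≤ b) (hab : a + 2 * b < 1)
    (hS : IsClassDT P d T S a b) (x₀ : M) :
    ConeSeqCauchy P d (fun n => T (S^[n] x₀)) := by
  obtain ⟨hne, hcl, -, hcomb, -⟩ := hP
  obtain ⟨hpos, hzero, hsymm, htri⟩ := hd
  have hadd : ∀ x y : E, x ∈ P → y ∈ P → x + y ∈ P := fun x y hx hy => by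
    simpa using hcomb 1 1 zero_le_one zero_le_one x y hx hy
  have hsm : ∀ (t : ℝ) (x : E), 0 ≤ t → x ∈ P → t • x ∈ P := fun t x ht hx => by
    simpa using hcomb t 0 ht le_rfl x x hx hx
  have hint : ∀ x y : E, x ∈ interior P → y ∈ P → x + y ∈ interior P := by
    intro x y hx hy
    rw [mem_interior]
    refine ⟨(fun z => z - y) ⁻¹' interior P, ?_, ?_, ?_⟩
    · intro z hz
      have := hadd _ _ (interior_subset hz) hy
      simpa using this
    · exact isOpen_interior.preimage (by fun_prop)
    · simpa using hx
  simp only [IsClassDT, ConeLe] at hS hpos htri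
  have hb1 : 0 < 1 - b := by linarith
  obtain ⟨k, hk⟩ : ∃ k, k = (a + b) / (1 - b) := ⟨_, rfl⟩
  have hk0 : 0 ≤ k := by rw [hk]; positivity
  have hk1 : k < 1 := by rw [hk, div_lt_one hb1]; linarith
  have hkm : (1 - b)⁻¹ * (a + b) = k := by rw [hk]; ring
  obtain ⟨y, hy⟩ : ∃ y : ℕ → M, y = fun n => T (S^[n] x₀) := ⟨_, rfl⟩
  rw [← hy]
  have hstep : ∀ n, k • d (y n) (y (n+1)) - d (y (n+1)) (y (n+2)) ∈ P := by
    intro n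
    have h := hS (S^[n] x₀) (S^[n+1] x₀)
    simp only [← Function.iterate_succ_apply' S] at h
    have h2 := hsm (1 - b)⁻¹ _ (inv_nonneg.2 hb1.le) h
    subst hy
    convert h2 using 1
    rw [← hkm]
    match_scalars <;> field_simp <;> ring
  have hu0 : d (y 0) (y 1) ∈ P := by simpa using hpos (y 0) (y 1)
  have hgeo : ∀ n, k ^ n • d (y 0) (y 1) - d (y n) (y (n+1)) ∈ P := by
    intro n
    induction n with
    | zero => simpa using hsm 0 _ le_rfl hu0
    | succ n ih =>
      have := hadd _ _ (hsm k _ hk0 ih) (hstep n)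
      convert this using 1
      module
  obtain ⟨r, hr⟩ : ∃ r, r = (1 - k)⁻¹ := ⟨_, rfl⟩
  have hk2 : 0 < 1 - k := by linarith
  have hr0 : 0 ≤ r := by rw [hr]; positivity
  have hr1 : r * (1 - k) = 1 := by rw [hr]; exact inv_mul_cancel₀ hk2.ne'
  have hsum : ∀ n j, (r * (k ^ n - k ^ (n+j+1))) • d (y 0) (y 1) - d (y n) (y (n+j+1)) ∈ P := by
    intro n j
    induction j with
    | zero =>
      have e : r * (k ^ n - k ^ (n+0+1)) = k ^ n := by
        linear_combination k ^ n * hr1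
      rw [e]; exact hgeo n
    | succ j ih =>
      have := hadd _ _ (hadd _ _ ih (hgeo (n+j+1))) (htri (y n) (y (n+j+1+1)) (y (n+j+1)))
      have e : r * (k ^ n - k ^ (n+(j+1)+1)) = r * (k ^ n - k ^ (n+j+1)) + k ^ (n+j+1) := by
        linear_combination k ^ (n+j+1) * hr1
      rw [e, show n + (j+1) + 1 = n+j+1+1 by ring]
      convert this using 1
      module
  intro c hc
  simp only [ConeLt, sub_zero] at hc ⊢
  have hlim : Tendsto (fun n : ℕ => c - (r * k ^ n) • d (y 0) (y 1)) atTop (nhds c) := by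
    have h1 := (tendsto_pow_atTop_nhds_zero_of_lt_one hk0 hk1).const_mul r
    have h2 := (h1.smul_const (d (y 0) (y 1))).const_sub c
    simpa using h2
  obtain ⟨N, hN⟩ := eventually_atTop.1 (hlim.eventually (isOpen_interior.mem_nhds hc))
  have key : ∀ n ≥ N, ∀ j, c - d (y n) (y (n+j+1)) ∈ interior P := by
    intro n hn j
    have h := hint _ _ (hN n hn) (hadd _ _ (hsum n j) (hsm (r * k ^ (n+j+1)) _ (by positivity) hu0))
    convert h using 1
    module
  refine ⟨N, fun m hm n hn => ?_⟩
  rcases lt_trichotomy m n with h | h | h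
  · obtain ⟨j, rfl⟩ := Nat.exists_eq_add_of_lt h
    exact key m hm j
  · subst h
    have hz : d (y m) (y m) = 0 := (hzero _ _).2 rfl
    rw [hz, sub_zero]; exact hc
  · obtain ⟨j, rfl⟩ := Nat.exists_eq_add_of_lt h
    rw [hsymm]
    exact key n hn j
end

section
/- Let (M,d) be a cone metric space over a real Banach space E with cone P (with nonempty interior), and let T, S : M → M be maps such that T is continuous and injective. Suppose S is of class D_T(a,b) with constants a, b ≥ 0 and b < 1. If (x_n) is a sequence in M converging to a point p with S p = p, then d(T x_n, T S x_n) → 0, in the sense that for every c ∈ E with 0 ≪ c there exists N such that d(T x_n, T S x_n) ≪ c for all n ≥ N. -/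
open Filter

/-- if `S ∈ D_T(a,b)` with `b < 1` and `(xₙ)` converges to a
fixed point `p` of `S`, then `d(T xₙ, T S xₙ) → 0`. -/
theorem stmt4 {E : Type*} [NormedAddCommGroup E] [NormedSpace ℝ E] [CompleteSpace E]
    {M : Type*} (P : Set E) (hP : IsCone P) (hPint : (interior P).Nonempty)
    (d : M → M → E) (hd : IsConeMetric P d)
    (T S : M → M) (hTcont : ConeContinuous P d T) (hTinj : Function.Injective T)
    (a b : ℝ) (ha : 0 ≤ a) (hb : 0 ≤ b) (hb1 : b < 1)
    (hS : IsClassDT P d T S a b)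
    (x : ℕ → M) (p : M) (hp : S p = p) (hx : ConeSeqTendsto P d x p) :
    ∀ c : E, ConeLt P 0 c → ∃ N : ℕ, ∀ n ≥ N, ConeLt P (d (T (x n)) (T (S (x n)))) c := by
  obtain ⟨-, -, -, hcomb, -⟩ := hP
  obtain ⟨-, hd0, hsymm, htri⟩ := hd
  have hadd : ∀ u v : E, u ∈ P → v ∈ P → u + v ∈ P := fun u v hu hv => by
    simpa using hcomb 1 1 zero_le_one zero_le_one u v hu hv
  have hsm : ∀ (k : ℝ) (u : E), 0 ≤ k → u ∈ P → k • u ∈ P := fun k u hk hu => by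
    simpa using hcomb k 0 hk le_rfl u u hu hu
  have hsmI : ∀ (k : ℝ) (u : E), 0 < k → u ∈ interior P → k • u ∈ interior P := by
    intro k u hk hu
    have h1 : k • u ∈ (fun v : E => k⁻¹ • v) ⁻¹' interior P := by
      simpa [smul_smul, inv_mul_cancel₀ hk.ne'] using hu
    refine interior_maximal ?_ (isOpen_interior.preimage (continuous_const_smul k⁻¹)) h1
    intro v hv
    have := hsm k _ hk.le (interior_subset hv)
    simpa [smul_smul, mul_inv_cancel₀ hk.ne'] using this
  have haddI : ∀ u v : E, u ∈ interior P → v ∈ P → u + v ∈ interior P := by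
    intro u v hu hv
    have h1 : u + v ∈ (fun w : E => w - v) ⁻¹' interior P := by simpa using hu
    refine interior_maximal ?_ (isOpen_interior.preimage (continuous_id.sub continuous_const)) h1
    intro w hw
    simpa using hadd _ _ (interior_subset hw) hv
  intro c hc
  have hb2 : 0 < 1 - b := by linarith
  have hk : 0 < (1 + a) / (1 - b) := by positivity
  obtain ⟨N, hN⟩ := hTcont x p hx (((1 + a) / (1 - b))⁻¹ • c) (by
    unfold ConeLt at hc ⊢
    simpa using hsmI _ _ (inv_pos.2 hk) (by simpa using hc))
  refine ⟨N, fun n hn => ?_⟩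
  have h1 := hN n hn
  have h2 := htri (T (x n)) (T (S (x n))) (T p)
  have h3 := hS (x n) p
  unfold ConeLt at h1 ⊢
  unfold ConeLe at h2 h3
  rw [hp, (hd0 (T p) (T p)).2 rfl, hsymm (T (S (x n)))] at h3
  have h4 := haddI _ _ (hsmI _ _ hk h1) (hsm (1 - b)⁻¹ _ (inv_pos.2 hb2).le (hadd _ _ h2 h3))
  convert h4 using 1
  match_scalars <;> field_simp <;> ring
end

section
/- Let (M,d) be a cone metric space over a real Banach space E with cone P (with nonempty interior), and let T, S : M → M be maps such that T is continuous and injective. Suppose S is of class D_T(a,b) with constants a, b ≥ 0 and b < 1. If (x_n) is a sequence in M converging to a point p ∈ M and d(T x_n, T S x_n) → 0 (i.e., for every c ∈ E with 0 ≪ c there exists N such that d(T x_n, T S x_n) ≪ c for all n ≥ N), then p is a fixed point of S: S p = p. -/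
open Filter

open scoped Pointwise in
/-- if `S ∈ D_T(a,b)` with `b < 1`, `(xₙ)` converges to `p` and
`d(T xₙ, T S xₙ) → 0`, then `p` is a fixed point of `S`. -/
theorem stmt5 {E : Type*} [NormedAddCommGroup E] [NormedSpace ℝ E] [CompleteSpace E]
    {M : Type*} (P : Set E) (hP : IsCone P) (hPint : (interior P).Nonempty)
    (d : M → M → E) (hd : IsConeMetric P d)
    (T S : M → M) (hTcont : ConeContinuous P d T) (hTinj : Function.Injective T)
    (a b : ℝ) (ha : 0 ≤ a) (hb : 0 ≤ b) (hb1 : b < 1)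
    (hS : IsClassDT P d T S a b)
    (x : ℕ → M) (p : M) (hx : ConeSeqTendsto P d x p)
    (hlim : ∀ c : E, ConeLt P 0 c →
      ∃ N : ℕ, ∀ n ≥ N, ConeLt P (d (T (x n)) (T (S (x n)))) c) :
    S p = p := by
  obtain ⟨-, hcl, -, hadd, hanti⟩ := hP
  obtain ⟨hpos, hzero, hsymm, htri⟩ := hd
  obtain ⟨c, hc⟩ := hPint
  have hsm : ∀ t : ℝ, 0 ≤ t → ∀ v ∈ P, t • v ∈ P := by
    intro t ht v hv
    have := hadd t 0 ht le_rfl v v hv hv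
    simpa using this
  have hsum : ∀ v ∈ P, ∀ w ∈ P, v + w ∈ P := by
    intro v hv w hw
    have := hadd 1 1 zero_le_one zero_le_one v w hv hw
    simpa using this
  have hint : ∀ t : ℝ, 0 < t → t • c ∈ interior P := by
    intro t ht
    have h1 : t • c ∈ t • interior P := Set.smul_mem_smul_set hc
    rw [← interior_smul₀ ht.ne'] at h1
    refine interior_mono ?_ h1
    rintro _ ⟨v, hv, rfl⟩
    exact hsm t ht.le v hv
  have key : ∀ t : ℝ, 0 < t →
      t • ((1 + a + (1 + b)) • c) - (1 - b) • d (T p) (T (S p)) ∈ P := by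
    intro t ht
    have hlt : ConeLt P 0 (t • c) := by
      unfold ConeLt
      simpa using hint t ht
    obtain ⟨N1, h1⟩ := hTcont x p hx _ hlt
    obtain ⟨N2, h2⟩ := hlim _ hlt
    have hA := interior_subset (h1 (max N1 N2) (le_max_left _ _))
    have hB := interior_subset (h2 (max N1 N2) (le_max_right _ _))
    beta_reduce at hA
    generalize x (max N1 N2) = y at hA hB
    have e1 := htri (T p) (T (S p)) (T y)
    have e2 := htri (T y) (T (S p)) (T (S y))
    have e3 := hS y p
    rw [hsymm (T p) (T y)] at e1
    unfold ConeLe at e1 e2 e3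
    have hA' := hsm (1 + a) (by linarith) _ hA
    have hB' := hsm (1 + b) (by linarith) _ hB
    have := hsum _ (hsum _ (hsum _ (hsum _ e1 _ e2) _ e3) _ hA') _ hB'
    convert this using 1
    module
  have hlimP : -((1 - b) • d (T p) (T (S p))) ∈ P := by
    have ht : Tendsto (fun t : ℝ => t • ((1 + a + (1 + b)) • c) - (1 - b) • d (T p) (T (S p)))
        (nhdsWithin 0 (Set.Ioi 0)) (nhds (-((1 - b) • d (T p) (T (S p))))) := by
      have hcont : Continuous
          (fun t : ℝ => t • ((1 + a + (1 + b)) • c) - (1 - b) • d (T p) (T (S p))) := by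
        fun_prop
      have := hcont.tendsto 0
      simp only [zero_smul, zero_sub] at this
      exact this.mono_left nhdsWithin_le_nhds
    refine hcl.mem_of_tendsto ht ?_
    filter_upwards [self_mem_nhdsWithin] with t ht using key t ht
  have hu : d (T p) (T (S p)) ∈ P := by
    have := hpos (T p) (T (S p))
    unfold ConeLe at this
    simpa using this
  have h0 := hanti _ (hsm (1 - b) (by linarith) _ hu) hlimP
  have h00 : d (T p) (T (S p)) = 0 := by
    rcases smul_eq_zero.mp h0 with h | h
    · linarith
    · exact h
  exact (hTinj ((hzero _ _).mp h00)).symm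
end

section
/- Let (M,d) be a cone metric space over a real Banach space E with cone P (with nonempty interior), and let T, S : M → M be maps such that T is continuous and injective. Suppose S is of class D_T(a,b) with constants a, b ≥ 0 and b < 1, and suppose p ∈ M is a fixed point of S (S p = p). Then for every sequence (x_n) in M converging to p, the sequence (T S x_n) converges to T p = T S p in (M,d); that is, for every c ∈ E with 0 ≪ c there exists N such that d(T S x_n, T p) ≪ c for all n ≥ N. (The paper phrases this as: S is continuous at p.) -/
open Filter

theorem cone_aux {E : Type*} [NormedAddCommGroup E] [NormedSpace ℝ E] {P : Set E}
    (hP : IsCone P) {K : ℝ} (hK : 0 < K) {x y : E} (hx : x ∈ interior P) (hy : y ∈ P) :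
    K • x + y ∈ interior P := by
  have ho : IsOpen ((fun z : E => K • z + y) '' interior P) :=
    ((Homeomorph.smulOfNeZero K hK.ne').trans (Homeomorph.addRight y)).isOpenMap _ isOpen_interior
  refine interior_maximal ?_ ho ⟨x, hx, rfl⟩
  rintro _ ⟨z, hz, rfl⟩
  have := hP.2.2.2.1 K 1 hK.le zero_le_one z y (interior_subset hz) hy
  simpa using this

/-- if `S ∈ D_T(a,b)` with `b < 1` and `p` is a fixed point of
`S`, then for every sequence `(xₙ)` converging to `p` the sequence `(T S xₙ)`
converges to `T p` (i.e. `S` is continuous at `p`). -/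
theorem stmt6 {E : Type*} [NormedAddCommGroup E] [NormedSpace ℝ E] [CompleteSpace E]
    {M : Type*} (P : Set E) (hP : IsCone P) (hPint : (interior P).Nonempty)
    (d : M → M → E) (hd : IsConeMetric P d)
    (T S : M → M) (hTcont : ConeContinuous P d T) (hTinj : Function.Injective T)
    (a b : ℝ) (ha : 0 ≤ a) (hb : 0 ≤ b) (hb1 : b < 1)
    (hS : IsClassDT P d T S a b)
    (p : M) (hp : S p = p) :
    ∀ x : ℕ → M, ConeSeqTendsto P d x p →
      ConeSeqTendsto P d (fun n => T (S (x n))) (T p) := by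
  intro x hx c hc
  have hb' : 0 < 1 - b := by linarith
  have hK : 0 < (a + b) / (1 - b) + 1 := by positivity
  obtain ⟨h0, heq, hsymm, htri⟩ := hd
  have hadd := hP.2.2.2.1
  have hzero : (0 : E) ∈ P := by
    have := h0 p p
    rwa [(heq p p).2 rfl, ConeLe, sub_zero] at this
  have hc' : ConeLt P 0 (((a + b) / (1 - b) + 1)⁻¹ • c) := by
    unfold ConeLt at hc ⊢
    rw [sub_zero] at hc ⊢
    simpa using cone_aux hP (inv_pos.2 hK) hc hzero
  obtain ⟨N, hN⟩ := hTcont x p hx _ hc'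
  refine ⟨N, fun n hn => ?_⟩
  have h1 := hN n hn
  have h2 := hS (x n) p
  have h3 := htri (T (x n)) (T (S (x n))) (T p)
  have h4 := h0 (T (x n)) (T p)
  rw [hp, (heq (T p) (T p)).2 rfl] at h2
  rw [hsymm (T p)] at h3
  unfold ConeLe at h2 h3 h4
  unfold ConeLt at h1 ⊢
  have h5 := hadd 1 b zero_le_one hb _ _ h2 h3
  have h6 := hadd (1 - b)⁻¹ 1 (inv_pos.2 hb').le zero_le_one _ _ h5 h4
  have h7 := cone_aux hP hK h1 h6
  convert h7 using 1
  have hne := hb'.ne'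
  rw [smul_sub, smul_inv_smul₀ hK.ne']
  match_scalars <;> field_simp <;> ring
end
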